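/- Let Ω ⊂ ℝⁿ be a bounded open set, T > 0, g : (ℝⁿ ∖ Ω) × [0,T] → ℝ and u₀ : Ω → ℝ. Suppose ṽ : ℝⁿ × [0,T] → ℝ is bounded and continuous, continuously differentiable in t, with ṽ(·,t) ∈ C²(ℝⁿ) having first and second derivatives bounded uniformly in t and α-Hölder second derivatives with a constant H uniform in t, and that ṽ satisfies ∂ₜṽ(x,t) = 𝒦ṽ(x,t) := Σ_{i,j=1}^{n} a_{ij}(x) ∂ᵢ∂ⱼṽ(x,t) + Σ_{i=1}^{n} bᵢ(x) ∂ᵢṽ(x,t) for x ∈ Ω and t ∈ (0,T], ṽ(x,t) = g(x,t) for x ∉ Ω, and ṽ(x,0) = u₀(x) for x ∈ Ω. For each 0 < ε ≤ 1 let u^ε : ℝⁿ × [0,T] → ℝ be bounded, continuous on cl(Ω) × [0,T], differentiable in t on (0,T] for each x ∈ Ω, and satisfy ∂ₜu^ε(x,t) = 𝒦_ε u^ε(·,t)(x) for x ∈ Ω and t ∈ (0,T], u^ε(x,t) = g(x,t) for x ∉ Ω, and u^ε(x,0) = u₀(x) for x ∈ Ω. Then there exists a constant c, independent of ε, such that sup_{(x,t)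 ∈ Ω × [0,T]} |u^ε(x,t) − ṽ(x,t)| ≤ c ε^α for all 0 < ε ≤ 1. (This is the abelian instance of the paper's Theorem 1.1.) -/

import Mathlib

open MeasureTheory Matrix Set

/-- First partial derivative `∂ᵢ f (x)`. -/
noncomputable def pd1 {n : ℕ} (f : EuclideanSpace ℝ (Fin n) → ℝ)
    (x : EuclideanSpace ℝ (Fin n)) (i : Fin n) : ℝ :=
  fderiv ℝ f x (EuclideanSpace.single i 1)

/-- Second partial derivative `∂ᵢ∂ⱼ f (x)`. -/
noncomputable def pd2 {n : ℕ} (f : EuclideanSpace ℝ (Fin n) → ℝ)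
    (x : EuclideanSpace ℝ (Fin n)) (i j : Fin n) : ℝ :=
  fderiv ℝ (fderiv ℝ f) x (EuclideanSpace.single i 1) (EuclideanSpace.single j 1)

/-- The Laplacian `Δf(x) = ∑ᵢ ∂ᵢ∂ᵢ f(x)`. -/
noncomputable def lap {n : ℕ} (f : EuclideanSpace ℝ (Fin n) → ℝ)
    (x : EuclideanSpace ℝ (Fin n)) : ℝ :=
  ∑ i, pd2 f x i i

/-- Matrix acting on a Euclidean vector. -/
noncomputable def mvec {n : ℕ} (A : Matrix (Fin n) (Fin n) ℝ)
    (x : EuclideanSpace ℝ (Fin n)) : EuclideanSpace ℝ (Fin n) :=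
  Matrix.toEuclideanLin A x

/-- The affine function `ã(w) = w₁ + ⋯ + w_n + M`. -/
noncomputable def atil {n : ℕ} (M : ℝ) (w : EuclideanSpace ℝ (Fin n)) : ℝ :=
  (∑ i, w i) + M

/-- The matrix `E(x) = (M/2) W(x) A(x)⁻¹` with `W(x) = diag(b(x))`. -/
noncomputable def Emat {n : ℕ} (M : ℝ) (A : EuclideanSpace ℝ (Fin n) → Matrix (Fin n) (Fin n) ℝ)
    (b : EuclideanSpace ℝ (Fin n) → Fin n → ℝ) (x : EuclideanSpace ℝ (Fin n)) :
    Matrix (Fin n) (Fin n) ℝ :=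
  (M / 2) • (Matrix.diagonal (b x) * (A x)⁻¹)

/-- The rescaled kernel
`K_ε(x,y) = (c(x)/ε^{n+2}) ã(−E(x)(x−y)) J(L(x)⁻¹(x−y)/ε)`,
where `c(x) = 2/(C(J) M det(A(x))^{1/2})`. -/
noncomputable def Kker {n : ℕ} (J : EuclideanSpace ℝ (Fin n) → ℝ) (CJ M : ℝ)
    (A L : EuclideanSpace ℝ (Fin n) → Matrix (Fin n) (Fin n) ℝ)
    (b : EuclideanSpace ℝ (Fin n) → Fin n → ℝ)
    (ε : ℝ) (x y : EuclideanSpace ℝ (Fin n)) : ℝ :=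
  2 / (CJ * M * Real.sqrt (A x).det) / ε ^ (n + 2) *
    atil M (-(mvec (Emat M A b x) (x - y))) *
    J (ε⁻¹ • mvec (L x)⁻¹ (x - y))

/-- The rescaled nonlocal operator `𝒦_ε u(x) = ∫ K_ε(x,y)(u(y) − u(x)) dy`. -/
noncomputable def Kop {n : ℕ} (J : EuclideanSpace ℝ (Fin n) → ℝ) (CJ M : ℝ)
    (A L : EuclideanSpace ℝ (Fin n) → Matrix (Fin n) (Fin n) ℝ)
    (b : EuclideanSpace ℝ (Fin n) → Fin n → ℝ)
    (ε : ℝ) (u : EuclideanSpace ℝ (Fin n) → ℝ) (x : EuclideanSpace ℝ (Fin n)) : ℝ :=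
  ∫ y, Kker J CJ M A L b ε x y * (u y - u x)

/-- The local operator `𝒦u(x) = ∑ᵢⱼ aᵢⱼ(x)∂ᵢ∂ⱼu(x) + ∑ᵢ bᵢ(x)∂ᵢu(x)`. -/
noncomputable def Kloc {n : ℕ} (A : EuclideanSpace ℝ (Fin n) → Matrix (Fin n) (Fin n) ℝ)
    (b : EuclideanSpace ℝ (Fin n) → Fin n → ℝ)
    (u : EuclideanSpace ℝ (Fin n) → ℝ) (x : EuclideanSpace ℝ (Fin n)) : ℝ :=
  (∑ i, ∑ j, A x i j * pd2 u x i j) + ∑ i, b x i * pd1 u x i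

/-
In the variable `z` given by `y = x - ε L(x) z` the operator `𝒦_ε` integrates increments of `u`
against an even kernel times an affine weight. Expanding `ṽ` to second order, the terms of odd
total degree in `z` cancel, and the isotropic second moments turn the even ones into `𝒦ṽ`: the
weight's linear part pairs with the gradient to give the drift, its constant part with the Hessian
to give `A = L Lᵀ`. The `α`-Hölder bound leaves a consistency error `O(ε^α)`. Hence `w = u^ε - ṽ`
vanishes off `Ω` and at time `0`, and solves `∂ₜw = 𝒦_ε w + O(ε^α)`; since `𝒦_ε w ≤ 0` at a spatial
maximum of `w`, a maximum principle bounds `|w|` by `O(ε^α) t`.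
-/

section Taylor

variable {F : Type*} [NormedAddCommGroup F] [NormedSpace ℝ F]

theorem norm_sub_taylor_two_le_of_hasDerivAt {φ φ' φ'' : ℝ → F} {B : ℝ}
    (hφ : ∀ s, HasDerivAt φ (φ' s) s) (hφ' : ∀ s, HasDerivAt φ' (φ'' s) s)
    (hB : ∀ s ∈ Icc (0 : ℝ) 1, ‖φ'' s - φ'' 0‖ ≤ B) :
    ‖φ 1 - φ 0 - φ' 0 - (1 / 2 : ℝ) • φ'' 0‖ ≤ B := by
  have hB0 : 0 ≤ B := (norm_nonneg _).trans (hB 0 (by simp))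
  have first_order : ∀ s ∈ Icc (0 : ℝ) 1, ‖φ' s - φ' 0 - s • φ'' 0‖ ≤ B := fun s hs ↦ by
    have h := norm_image_sub_le_of_norm_deriv_le_segment' (f := fun s ↦ φ' s - s • φ'' 0)
      (fun s _ ↦ ((hφ' s).sub ((hasDerivAt_id' s).smul_const (φ'' 0))).hasDerivWithinAt)
      (fun s hs ↦ by simpa using hB s (Ico_subset_Icc_self hs)) s hs
    simp only [zero_smul, sub_zero, sub_right_comm _ (s • φ'' 0)] at h
    exact h.trans (mul_le_of_le_one_right hB0 hs.2)
  have h := norm_image_sub_le_of_norm_deriv_le_segment_01'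
    (f := fun s ↦ φ s - s • φ' 0 - (s ^ 2 / 2) • φ'' 0)
    (f' := fun s ↦ φ' s - φ' 0 - s • φ'' 0) (C := B)
    (fun s _ ↦ by
      have hsq : HasDerivAt (fun s : ℝ ↦ s ^ 2 / 2) s s := by
        simpa using ((hasDerivAt_id' s).pow 2).div_const 2
      have hd := ((hφ s).sub ((hasDerivAt_id' s).smul_const (φ' 0))).sub (hsq.smul_const (φ'' 0))
      rw [one_smul] at hd
      exact hd.hasDerivWithinAt)
    (fun s hs ↦ first_order s (Ico_subset_Icc_self hs))
  convert h using 2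
  simp only [one_smul, one_pow, zero_smul, ne_eq, OfNat.ofNat_ne_zero, not_false_eq_true,
    zero_pow, zero_div, sub_zero]
  abel

variable {W : Type*} [NormedAddCommGroup W] [NormedSpace ℝ W]

/-- The error of the second-order Taylor expansion of `f` at `x` with increment `h`. -/
noncomputable def secondTaylorRemainder (f : W → F) (x h : W) : F :=
  f (x + h) - f x - fderiv ℝ f x h - (1 / 2 : ℝ) • fderiv ℝ (fderiv ℝ f) x h h

theorem norm_secondTaylorRemainder_le {f : W → F} (hf : ContDiff ℝ 2 f) {x h : W} {B : ℝ}
    (hB : ∀ s ∈ Icc (0 : ℝ) 1,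
      ‖fderiv ℝ (fderiv ℝ f) (x + s • h) h h - fderiv ℝ (fderiv ℝ f) x h h‖ ≤ B) :
    ‖secondTaylorRemainder f x h‖ ≤ B := by
  have hf' : ContDiff ℝ 1 (fderiv ℝ f) := hf.fderiv_right (by norm_num)
  have line (s : ℝ) : HasDerivAt (fun s : ℝ ↦ x + s • h) h s := by
    simpa using ((hasDerivAt_id s).smul_const h).const_add x
  have hφ (s : ℝ) : HasDerivAt (fun s : ℝ ↦ f (x + s • h)) (fderiv ℝ f (x + s • h) h) s :=
    (hf.differentiable two_ne_zero _).hasFDerivAt.comp_hasDerivAt s (line s)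
  have hφ' (s : ℝ) : HasDerivAt (fun s : ℝ ↦ fderiv ℝ f (x + s • h) h)
      (fderiv ℝ (fderiv ℝ f) (x + s • h) h h) s := by
    simpa using ((hf'.differentiable one_ne_zero _).hasFDerivAt.comp_hasDerivAt s
      (line s)).clm_apply (hasDerivAt_const s h)
  simpa [secondTaylorRemainder] using
    norm_sub_taylor_two_le_of_hasDerivAt hφ hφ' (by simpa using hB)

end Taylor

section SymmetricKernel

theorem integral_eq_zero_of_odd {V F : Type*} [MeasurableSpace V] [AddGroup V]
    [MeasurableNeg V] {μ : Measure V} [μ.IsNegInvariant] [NormedAddCommGroup F] [NormedSpace ℝ F]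
    {f : V → F} (hf : ∀ z, f (-z) = -f z) : ∫ z, f z ∂μ = 0 := by
  have h := integral_neg_eq_self f μ
  simp only [hf, integral_neg] at h
  have : IsAddTorsionFree F := .of_isTorsionFree ℝ F
  exact self_eq_neg.1 h.symm

theorem integrable_mul_of_hasCompactSupport_left {V : Type*} [TopologicalSpace V] [T2Space V]
    [MeasurableSpace V] [OpensMeasurableSpace V] {μ : Measure V} {J f : V → ℝ}
    (hJ : Integrable J μ) (hJc : HasCompactSupport J) (hf : Continuous f) :
    Integrable (fun z ↦ J z * f z) μ :=
  (integrableOn_iff_integrable_of_support_subset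
    ((Function.support_mul_subset_left J f).trans (subset_tsupport J))).1
    (hJ.integrableOn.mul_continuousOn hf.continuousOn hJc)

variable {V : Type*} [NormedAddCommGroup V] [NormedSpace ℝ V] [MeasurableSpace V] [BorelSpace V]
  {μ : Measure V} [μ.IsNegInvariant] {J : V → ℝ}

theorem abs_integral_mul_affine_le (hJ : Integrable J μ) (hJc : HasCompactSupport J)
    (hJe : ∀ z, J (-z) = J z) (ℓ : V →L[ℝ] ℝ) {M B : ℝ} (hℓ : ∀ z, 0 ≤ J z * (M - ℓ z))
    {R : V → ℝ} (hR : ∀ z ∈ tsupport J, |R z| ≤ B) :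
    |∫ z, J z * ((M - ℓ z) * R z) ∂μ| ≤ M * (∫ z, J z ∂μ) * B := by
  have hJℓ := integrable_mul_of_hasCompactSupport_left hJ hJc ℓ.continuous
  have hJℓ_zero : ∫ z, J z * ℓ z ∂μ = 0 :=
    integral_eq_zero_of_odd fun z ↦ by rw [hJe, map_neg, mul_neg]
  have bound (z : V) : ‖J z * ((M - ℓ z) * R z)‖ ≤ (M * B) * J z - B * (J z * ℓ z) := by
    by_cases hz : z ∈ tsupport J
    · rw [← mul_assoc, norm_mul, Real.norm_of_nonneg (hℓ z), Real.norm_eq_abs]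
      calc J z * (M - ℓ z) * |R z| ≤ J z * (M - ℓ z) * B :=
            mul_le_mul_of_nonneg_left (hR z hz) (hℓ z)
        _ = (M * B) * J z - B * (J z * ℓ z) := by ring
    · simp [image_eq_zero_of_notMem_tsupport hz]
  calc |∫ z, J z * ((M - ℓ z) * R z) ∂μ|
      ≤ ∫ z, (M * B) * J z - B * (J z * ℓ z) ∂μ :=
        norm_integral_le_of_norm_le ((hJ.const_mul _).sub (hJℓ.const_mul _)) (.of_forall bound)
    _ = M * (∫ z, J z ∂μ) * B := by
        rw [integral_sub (hJ.const_mul _) (hJℓ.const_mul _), integral_const_mul,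
          integral_const_mul, hJℓ_zero]
        ring

variable {W : Type*} [NormedAddCommGroup W] [NormedSpace ℝ W]

/- The increment `f (x - P z) - f x` is minus an odd term plus half a quadratic one plus a
remainder; against the even `J` and the affine weight `M - ℓ z` only the products of equal parity
survive. -/
theorem abs_integral_increment_sub_le (hJ : Integrable J μ) (hJc : HasCompactSupport J)
    (hJe : ∀ z, J (-z) = J z) (P : V →L[ℝ] W) (ℓ : V →L[ℝ] ℝ) {M B : ℝ}
    (hℓ : ∀ z, 0 ≤ J z * (M - ℓ z)) {f : W → ℝ} (hf : Continuous f) {x : W}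
    (hB : ∀ z ∈ tsupport J, |secondTaylorRemainder f x (-P z)| ≤ B) :
    |∫ z, J z * ((M - ℓ z) * (f (x - P z) - f x)) ∂μ -
        ∫ z, J z * (ℓ z * fderiv ℝ f x (P z) +
          M / 2 * fderiv ℝ (fderiv ℝ f) x (P z) (P z)) ∂μ| ≤
      M * (∫ z, J z ∂μ) * B := by
  set R : V → ℝ := fun z ↦ secondTaylorRemainder f x (-P z) with hR
  set even : V → ℝ := fun z ↦
    ℓ z * fderiv ℝ f x (P z) + M / 2 * fderiv ℝ (fderiv ℝ f) x (P z) (P z) with h_even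
  set odd : V → ℝ := fun z ↦
    -(M * fderiv ℝ f x (P z)) - 1 / 2 * (ℓ z * fderiv ℝ (fderiv ℝ f) x (P z) (P z)) with h_odd
  have hRc : Continuous R := by simp only [hR, secondTaylorRemainder]; fun_prop
  have even_int := integrable_mul_of_hasCompactSupport_left hJ hJc (f := even) (by fun_prop)
  have odd_int := integrable_mul_of_hasCompactSupport_left hJ hJc (f := odd) (by fun_prop)
  have R_int := integrable_mul_of_hasCompactSupport_left hJ hJc
    (f := fun z ↦ (M - ℓ z) * R z) (by fun_prop)
  have integral_odd : ∫ z, J z * odd z ∂μ = 0 :=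
    integral_eq_zero_of_odd fun z ↦ by
      simp only [h_odd, hJe, map_neg, _root_.neg_apply]
      ring
  have split (z : V) : J z * ((M - ℓ z) * (f (x - P z) - f x)) =
      J z * even z + J z * odd z + J z * ((M - ℓ z) * R z) := by
    simp only [h_even, h_odd, hR, secondTaylorRemainder, map_neg, _root_.neg_apply, smul_eq_mul,
      sub_eq_add_neg x]
    ring
  have integral_split : ∫ z, J z * ((M - ℓ z) * (f (x - P z) - f x)) ∂μ =
      ∫ z, J z * even z ∂μ + ∫ z, J z * ((M - ℓ z) * R z) ∂μ := by
    simp only [split]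
    rw [integral_add (by exact even_int.add odd_int) R_int, integral_add even_int odd_int,
      integral_odd, add_zero]
  rw [integral_split, add_sub_cancel_left]
  exact abs_integral_mul_affine_le hJ hJc hJe ℓ hℓ hB

end SymmetricKernel

section Coordinates

variable {n : ℕ}

theorem mvec_eq_toEuclideanCLM (A : Matrix (Fin n) (Fin n) ℝ) (x : EuclideanSpace ℝ (Fin n)) :
    mvec A x = Matrix.toEuclideanCLM (𝕜 := ℝ) A x := rfl

theorem mvec_mul (A B : Matrix (Fin n) (Fin n) ℝ) (x : EuclideanSpace ℝ (Fin n)) :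
    mvec (A * B) x = mvec A (mvec B x) := by
  simp only [mvec_eq_toEuclideanCLM, map_mul, mul_apply_eq_comp]

theorem mvec_single_one_apply (A : Matrix (Fin n) (Fin n) ℝ) (i k : Fin n) :
    mvec A (EuclideanSpace.single k 1) i = A i k := by
  simp [mvec, Matrix.toLpLin_apply]

theorem fderiv_apply_eq_sum_pd1 (f : EuclideanSpace ℝ (Fin n) → ℝ)
    (x h : EuclideanSpace ℝ (Fin n)) : fderiv ℝ f x h = ∑ i, h i * pd1 f x i := by
  conv_lhs => rw [← (EuclideanSpace.basisFun (Fin n) ℝ).sum_repr h]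
  simp [pd1]

theorem apply_apply_eq_sum (B : EuclideanSpace ℝ (Fin n) →L[ℝ] EuclideanSpace ℝ (Fin n) →L[ℝ] ℝ)
    (h k : EuclideanSpace ℝ (Fin n)) :
    B h k = ∑ i, ∑ j, B (EuclideanSpace.single i 1) (EuclideanSpace.single j 1) * (h i * k j) := by
  conv_lhs => rw [← (EuclideanSpace.basisFun (Fin n) ℝ).sum_repr h,
    ← (EuclideanSpace.basisFun (Fin n) ℝ).sum_repr k]
  rw [Finset.sum_comm]
  simp only [map_sum, map_smul, _root_.sum_apply, _root_.smul_apply, smul_eq_mul, Finset.mul_sum,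
    EuclideanSpace.basisFun_apply, EuclideanSpace.basisFun_repr]
  exact Finset.sum_congr rfl fun j _ ↦ Finset.sum_congr rfl fun i _ ↦ by ring

theorem sum_coord_mul_fderiv_mvec_single (f : EuclideanSpace ℝ (Fin n) → ℝ)
    (x : EuclideanSpace ℝ (Fin n)) (Q P : Matrix (Fin n) (Fin n) ℝ) :
    ∑ k, (∑ m, mvec Q (EuclideanSpace.single k 1) m) *
        fderiv ℝ f x (mvec P (EuclideanSpace.single k 1)) =
      ∑ i, (∑ m, (Q * Pᵀ) m i) * pd1 f x i := by
  simp only [mvec_single_one_apply, fderiv_apply_eq_sum_pd1, Matrix.mul_apply,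
    Matrix.transpose_apply, Finset.mul_sum, Finset.sum_mul]
  rw [Finset.sum_comm]
  refine Finset.sum_congr rfl fun i _ ↦ Finset.sum_comm.trans ?_
  simp only [mul_assoc]

theorem sum_fderiv_fderiv_mvec_single (f : EuclideanSpace ℝ (Fin n) → ℝ)
    (x : EuclideanSpace ℝ (Fin n)) (P : Matrix (Fin n) (Fin n) ℝ) :
    ∑ k, fderiv ℝ (fderiv ℝ f) x (mvec P (EuclideanSpace.single k 1))
        (mvec P (EuclideanSpace.single k 1)) =
      ∑ i, ∑ j, (P * Pᵀ) i j * pd2 f x i j := by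
  simp only [apply_apply_eq_sum (fderiv ℝ (fderiv ℝ f) x) (mvec P _), mvec_single_one_apply,
    Matrix.mul_apply, Matrix.transpose_apply, Finset.sum_mul]
  rw [Finset.sum_comm]
  refine Finset.sum_congr rfl fun i _ ↦ Finset.sum_comm.trans ?_
  simp only [pd2, mul_comm]

theorem norm_mvec_sq_le (L : Matrix (Fin n) (Fin n) ℝ) (z : EuclideanSpace ℝ (Fin n)) :
    ‖mvec L z‖ ^ 2 ≤ (L * Lᵀ).trace * ‖z‖ ^ 2 := by
  rw [EuclideanSpace.real_norm_sq_eq, EuclideanSpace.real_norm_sq_eq, Matrix.trace, Finset.sum_mul]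
  refine Finset.sum_le_sum fun i _ ↦ ?_
  simpa [mvec, Matrix.toLpLin_apply, Matrix.mulVec, dotProduct, Matrix.mul_apply, sq] using
    Finset.sum_mul_sq_le_sq_mul_sq Finset.univ (L i) z

theorem exists_norm_mvec_le {X : Type*} {Ω : Set X} {L : X → Matrix (Fin n) (Fin n) ℝ} {a : ℝ}
    (ha : ∀ x ∈ Ω, ∀ i, (L x * (L x)ᵀ) i i ≤ a) {S : Set (EuclideanSpace ℝ (Fin n))}
    (hS : Bornology.IsBounded S) : ∃ ρ, 0 ≤ ρ ∧ ∀ x ∈ Ω, ∀ z ∈ S, ‖mvec (L x) z‖ ≤ ρ := by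
  obtain ⟨R, hR⟩ := hS.exists_norm_le
  refine ⟨√(n * |a| * R ^ 2), Real.sqrt_nonneg _, fun x hx z hz ↦ Real.le_sqrt_of_sq_le ?_⟩
  have trace_le : (L x * (L x)ᵀ).trace ≤ n * |a| := by
    simpa [Matrix.trace] using
      Finset.sum_le_card_nsmul Finset.univ _ _ fun i _ ↦ (ha x hx i).trans (le_abs_self a)
  exact (norm_mvec_sq_le (L x) z).trans (mul_le_mul trace_le
    (pow_le_pow_left₀ (norm_nonneg z) (hR z hz) 2) (sq_nonneg _) (by positivity))

theorem det_ne_zero_of_lowerTriangular_of_diag_pos {L : Matrix (Fin n) (Fin n) ℝ}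
    (hL : ∀ i j, i < j → L i j = 0) (hd : ∀ i, 0 < L i i) : L.det ≠ 0 := by
  rw [Matrix.det_of_isLowerTriangular L fun i j h ↦ hL i j h]
  exact (Finset.prod_pos fun i _ ↦ hd i).ne'

theorem abs_sum_mul_coord_le {a : Fin n → Fin n → ℝ} {δ : ℝ} (ha : ∀ i j, |a i j| ≤ δ)
    (hδ : 0 ≤ δ) (h : EuclideanSpace ℝ (Fin n)) :
    |∑ i, ∑ j, a i j * (h i * h j)| ≤ n * δ * ‖h‖ ^ 2 := by
  have sum_sq : (∑ i, |h i|) ^ 2 ≤ n * ‖h‖ ^ 2 := by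
    simpa [EuclideanSpace.real_norm_sq_eq] using
      sq_sum_le_card_mul_sum_sq (s := Finset.univ) (f := fun i ↦ |h i|)
  calc |∑ i, ∑ j, a i j * (h i * h j)| ≤ ∑ i, ∑ j, δ * (|h i| * |h j|) := by
        refine (Finset.abs_sum_le_sum_abs _ _).trans (Finset.sum_le_sum fun i _ ↦
          (Finset.abs_sum_le_sum_abs _ _).trans (Finset.sum_le_sum fun j _ ↦ ?_))
        rw [abs_mul, abs_mul]
        exact mul_le_mul_of_nonneg_right (ha i j) (by positivity)
    _ = δ * (∑ i, |h i|) ^ 2 := by rw [sq, Finset.sum_mul_sum]; simp only [Finset.mul_sum]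
    _ ≤ δ * (n * ‖h‖ ^ 2) := mul_le_mul_of_nonneg_left sum_sq hδ
    _ = n * δ * ‖h‖ ^ 2 := by ring

/-- `f` is twice continuously differentiable and its second partial derivatives are `α`-Hölder
with constant `H`. -/
structure HasHolderSecondDeriv (α H : ℝ) (f : EuclideanSpace ℝ (Fin n) → ℝ) : Prop where
  contDiff : ContDiff ℝ 2 f
  holder : ∀ x y i j, |pd2 f x i j - pd2 f y i j| ≤ H * ‖x - y‖ ^ α

theorem HasHolderSecondDeriv.abs_secondTaylorRemainder_le {α H : ℝ} (hα : 0 ≤ α) (hH : 0 ≤ H)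
    {f : EuclideanSpace ℝ (Fin n) → ℝ} (hf : HasHolderSecondDeriv α H f)
    (x : EuclideanSpace ℝ (Fin n)) {h : EuclideanSpace ℝ (Fin n)} {r : ℝ} (hr : ‖h‖ ≤ r) :
    |secondTaylorRemainder f x h| ≤ n * (H * r ^ α) * r ^ 2 := by
  have hr0 : 0 ≤ r := (norm_nonneg h).trans hr
  refine norm_secondTaylorRemainder_le hf.contDiff fun s hs ↦ ?_
  have increment : ‖x + s • h - x‖ ≤ r := by
    rw [add_sub_cancel_left, norm_smul, Real.norm_of_nonneg hs.1]
    exact (mul_le_of_le_one_left (norm_nonneg _) hs.2).trans hr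
  have entries (i j : Fin n) : |pd2 f (x + s • h) i j - pd2 f x i j| ≤ H * r ^ α :=
    (hf.holder (x + s • h) x i j).trans (by gcongr)
  simp only [apply_apply_eq_sum (fderiv ℝ (fderiv ℝ f) _) h, ← Finset.sum_sub_distrib, ← sub_mul]
  exact (abs_sum_mul_coord_le entries (by positivity) h).trans (by gcongr)

end Coordinates

section IsotropicKernel

variable {n : ℕ} {J : EuclideanSpace ℝ (Fin n) → ℝ} {CJ : ℝ}

/-- `J` is an integrable, compactly supported, even kernel whose second moments are those of an
isotropic one: `∫ J z zᵢ zⱼ = CJ δᵢⱼ` with `CJ > 0`. -/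
structure IsIsotropicKernel (J : EuclideanSpace ℝ (Fin n) → ℝ) (CJ : ℝ) : Prop where
  integrable : Integrable J
  hasCompactSupport : HasCompactSupport J
  even : ∀ z, J (-z) = J z
  pos : 0 < CJ
  moment : ∀ i j : Fin n, ∫ z, J z * (z i * z j) = if i = j then CJ else 0

theorem IsIsotropicKernel.integral_mul_apply_self (hJ : IsIsotropicKernel J CJ)
    (B : EuclideanSpace ℝ (Fin n) →L[ℝ] EuclideanSpace ℝ (Fin n) →L[ℝ] ℝ) :
    ∫ z, J z * B z z =
      CJ * ∑ k, B (EuclideanSpace.single k 1) (EuclideanSpace.single k 1) := by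
  have moment_integrable (i j : Fin n) : Integrable fun z ↦
      B (EuclideanSpace.single i 1) (EuclideanSpace.single j 1) * (J z * (z i * z j)) :=
    (integrable_mul_of_hasCompactSupport_left hJ.integrable hJ.hasCompactSupport
      (by fun_prop)).const_mul _
  have expand (z : EuclideanSpace ℝ (Fin n)) : J z * B z z = ∑ i, ∑ j,
      B (EuclideanSpace.single i 1) (EuclideanSpace.single j 1) * (J z * (z i * z j)) := by
    simp only [apply_apply_eq_sum B z z, Finset.mul_sum, mul_left_comm (J z)]
  simp only [expand]
  rw [integral_finsetSum _ fun i _ ↦ integrable_finsetSum _ fun j _ ↦ moment_integrable i j]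
  simp only [integral_finsetSum _ fun j _ ↦ moment_integrable _ j, integral_const_mul, hJ.moment]
  simp [Finset.mul_sum, mul_comm]

end IsotropicKernel

section RescaledOperator

variable {n : ℕ}

theorem integral_eq_smul_integral_sub_smul_mvec {F : Type*} [NormedAddCommGroup F]
    [NormedSpace ℝ F] {P : Matrix (Fin n) (Fin n) ℝ} (hP : P.det ≠ 0) {ε : ℝ} (hε : ε ≠ 0)
    (x : EuclideanSpace ℝ (Fin n)) (G : EuclideanSpace ℝ (Fin n) → F) :
    ∫ y, G y = |ε ^ n * P.det| • ∫ z, G (x - ε • mvec P z) := by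
  set Q : EuclideanSpace ℝ (Fin n) →L[ℝ] EuclideanSpace ℝ (Fin n) :=
    ε • Matrix.toEuclideanCLM (𝕜 := ℝ) P
  have det_Q : Q.det = ε ^ n * P.det := by
    change LinearMap.det (ε • Matrix.toEuclideanLin P) = _
    rw [LinearMap.det_smul, finrank_euclideanSpace_fin, Matrix.toEuclideanLin_eq_toLin_orthonormal,
      LinearMap.det_toLin]
  have det_ne : Q.det ≠ 0 := det_Q ▸ mul_ne_zero (pow_ne_zero n hε) hP
  have bijective : Function.Bijective Q := (Q.toContinuousLinearEquivOfDetNeZero det_ne).bijective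
  have h := integral_image_eq_integral_abs_det_fderiv_smul volume MeasurableSet.univ
    (fun z _ ↦ Q.hasFDerivWithinAt (x := z)) bijective.injective.injOn (fun y ↦ G (x - y))
  rw [image_univ, bijective.surjective.range_eq, setIntegral_univ, setIntegral_univ,
    integral_sub_left_eq_self, integral_smul, det_Q] at h
  exact h

/-- The weight of the jump `x ↦ x - ε L(x) z` in `𝒦_ε`: the kernel `K_ε(x, ·)` in the variable `z`,
up to a factor depending on `x` and `ε` only. -/
noncomputable def jumpWeight (J : EuclideanSpace ℝ (Fin n) → ℝ) (M : ℝ)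
    (A L : EuclideanSpace ℝ (Fin n) → Matrix (Fin n) (Fin n) ℝ)
    (b : EuclideanSpace ℝ (Fin n) → Fin n → ℝ) (ε : ℝ) (x z : EuclideanSpace ℝ (Fin n)) : ℝ :=
  J z * atil M (-(ε • mvec (Emat M A b x) (mvec (L x) z)))

variable {J : EuclideanSpace ℝ (Fin n) → ℝ} {CJ M ε : ℝ}
  {A L : EuclideanSpace ℝ (Fin n) → Matrix (Fin n) (Fin n) ℝ}
  {b : EuclideanSpace ℝ (Fin n) → Fin n → ℝ} {x : EuclideanSpace ℝ (Fin n)}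

theorem jumpWeight_nonneg {z : EuclideanSpace ℝ (Fin n)} (hJ : 0 ≤ J z)
    (h : z ∈ tsupport J → 0 ≤ atil M (-(ε • mvec (Emat M A b x) (mvec (L x) z)))) :
    0 ≤ jumpWeight J M A L b ε x z := by
  by_cases hz : z ∈ tsupport J
  · exact mul_nonneg hJ (h hz)
  · simp [jumpWeight, image_eq_zero_of_notMem_tsupport hz]

theorem Kker_sub_smul_mvec (hL : (L x).det ≠ 0) (hε : ε ≠ 0) (z : EuclideanSpace ℝ (Fin n)) :
    Kker J CJ M A L b ε x (x - ε • mvec (L x) z) =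
      2 / (CJ * M * √(A x).det) / ε ^ (n + 2) * jumpWeight J M A L b ε x z := by
  have invert : ε⁻¹ • mvec (L x)⁻¹ (ε • mvec (L x) z) = z := by
    rw [mvec, map_smul, smul_smul, inv_mul_cancel₀ hε, one_smul, ← mvec, ← mvec_mul,
      Matrix.nonsing_inv_mul _ hL.isUnit, mvec_eq_toEuclideanCLM, map_one,
      one_apply_eq_self]
  rw [Kker, sub_sub_cancel, invert, mvec, map_smul, ← mvec, jumpWeight]
  ring

theorem Kop_eq_integral (hA : A x = L x * (L x)ᵀ) (hL : (L x).det ≠ 0) (hε : 0 < ε)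
    (u : EuclideanSpace ℝ (Fin n) → ℝ) :
    Kop J CJ M A L b ε u x = 2 / (CJ * M * ε ^ 2) *
      ∫ z, jumpWeight J M A L b ε x z * (u (x - ε • mvec (L x) z) - u x) := by
  have sqrt_det : √(A x).det = |(L x).det| := by
    rw [hA, Matrix.det_mul, Matrix.det_transpose, Real.sqrt_mul_self_eq_abs]
  have abs_det_ne : |(L x).det| ≠ 0 := abs_ne_zero.2 hL
  rw [Kop, integral_eq_smul_integral_sub_smul_mvec hL hε.ne' x]
  simp only [Kker_sub_smul_mvec hL hε.ne', sqrt_det, mul_assoc]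
  rw [integral_const_mul, smul_eq_mul, ← mul_assoc, abs_mul, abs_of_pos (pow_pos hε n), pow_add]
  congr 1
  field_simp

theorem Kop_nonpos_of_forall_le (hA : A x = L x * (L x)ᵀ) (hL : (L x).det ≠ 0) (hε : 0 < ε)
    (hCJ : 0 < CJ) (hM : 0 < M) (hJ : ∀ z, 0 ≤ jumpWeight J M A L b ε x z)
    {w : EuclideanSpace ℝ (Fin n) → ℝ} (hw : ∀ y, w y ≤ w x) : Kop J CJ M A L b ε w x ≤ 0 := by
  rw [Kop_eq_integral hA hL hε]
  exact mul_nonpos_of_nonneg_of_nonpos (by positivity) (integral_nonpos fun z ↦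
    mul_nonpos_of_nonneg_of_nonpos (hJ z) (sub_nonpos.2 (hw _)))

theorem Kop_neg (w : EuclideanSpace ℝ (Fin n) → ℝ) :
    Kop J CJ M A L b ε (fun y ↦ -w y) x = -Kop J CJ M A L b ε w x := by
  simp only [Kop, ← integral_neg, ← mul_neg, neg_sub', sub_neg_eq_add, neg_add_eq_sub]

/-- The coordinate sum `w ↦ w₁ + ⋯ + wₙ`, the linear part of `ã`. -/
noncomputable def coordSum (n : ℕ) : EuclideanSpace ℝ (Fin n) →L[ℝ] ℝ :=
  ∑ i, EuclideanSpace.proj i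

theorem coordSum_apply (w : EuclideanSpace ℝ (Fin n)) : coordSum n w = ∑ i, w i := by
  simp [coordSum]

theorem integrable_jumpWeight_mul_of_continuous (hJ : Integrable J) (hJc : HasCompactSupport J)
    {h : EuclideanSpace ℝ (Fin n) → ℝ} (hh : Continuous h) :
    Integrable fun z ↦ jumpWeight J M A L b ε x z * h z := by
  simp only [jumpWeight, atil, mvec_eq_toEuclideanCLM, mul_assoc]
  exact integrable_mul_of_hasCompactSupport_left hJ hJc (by fun_prop)

theorem integrable_jumpWeight_mul_of_bounded (hJ : Integrable J) (hJc : HasCompactSupport J)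
    {h : EuclideanSpace ℝ (Fin n) → ℝ} (hh : Measurable h) {C : ℝ} (hC : ∀ z, |h z| ≤ C) :
    Integrable fun z ↦ jumpWeight J M A L b ε x z * h z := by
  have weight_integrable : Integrable (jumpWeight J M A L b ε x) := by
    simpa using integrable_jumpWeight_mul_of_continuous (M := M) (A := A) (L := L) (b := b)
      (ε := ε) (x := x) hJ hJc (continuous_const (y := (1 : ℝ)))
  exact weight_integrable.mul_bdd hh.aestronglyMeasurable (.of_forall hC)

theorem Kop_add (hA : A x = L x * (L x)ᵀ) (hL : (L x).det ≠ 0) (hε : 0 < ε)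
    (hJ : Integrable J) (hJc : HasCompactSupport J) {w v : EuclideanSpace ℝ (Fin n) → ℝ}
    (hw : Measurable w) {C : ℝ} (hC : ∀ y, |w y| ≤ C) (hv : Continuous v) :
    Kop J CJ M A L b ε (fun y ↦ w y + v y) x =
      Kop J CJ M A L b ε w x + Kop J CJ M A L b ε v x := by
  have jump_continuous : Continuous fun z ↦ x - ε • mvec (L x) z := by
    simp only [mvec_eq_toEuclideanCLM]; fun_prop
  rw [Kop_eq_integral hA hL hε, Kop_eq_integral hA hL hε, Kop_eq_integral hA hL hε, ← mul_add,
    ← integral_add]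
  · simp only [add_sub_add_comm, mul_add]
  · exact integrable_jumpWeight_mul_of_bounded hJ hJc
      ((hw.comp jump_continuous.measurable).sub_const _)
      fun z ↦ (abs_sub _ _).trans (add_le_add (hC _) (hC _))
  · exact integrable_jumpWeight_mul_of_continuous hJ hJc (by fun_prop)

theorem Emat_mul_cholesky (hA : A x = L x * (L x)ᵀ) (hL : (L x).det ≠ 0) :
    Emat M A b x * L x * (L x)ᵀ = (M / 2) • Matrix.diagonal (b x) := by
  have det_A : IsUnit (A x).det := by
    rw [hA, Matrix.det_mul, Matrix.det_transpose]
    exact (mul_ne_zero hL hL).isUnit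
  rw [Matrix.mul_assoc, ← hA, Emat, Matrix.smul_mul, Matrix.mul_assoc,
    Matrix.nonsing_inv_mul _ det_A, Matrix.mul_one]

theorem IsIsotropicKernel.integral_drift_add_diffusion (hJ : IsIsotropicKernel J CJ)
    (hA : A x = L x * (L x)ᵀ) (hL : (L x).det ≠ 0) (f : EuclideanSpace ℝ (Fin n) → ℝ) :
    ∫ z, J z * (coordSum n (mvec (Emat M A b x * L x) z) * fderiv ℝ f x (mvec (L x) z) +
        M / 2 * fderiv ℝ (fderiv ℝ f) x (mvec (L x) z) (mvec (L x) z)) =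
      CJ * M / 2 * Kloc A b f x := by
  set P := Matrix.toEuclideanCLM (𝕜 := ℝ) (L x)
  set Q := Matrix.toEuclideanCLM (𝕜 := ℝ) (Emat M A b x * L x)
  have trace := hJ.integral_mul_apply_self
    ((coordSum n ∘L Q).smulRight (fderiv ℝ f x ∘L P) +
      (M / 2) • (fderiv ℝ (fderiv ℝ f) x).bilinearComp P P)
  simp only [_root_.add_apply, _root_.smul_apply, ContinuousLinearMap.smulRight_apply,
    ContinuousLinearMap.comp_apply, ContinuousLinearMap.bilinearComp_apply, smul_eq_mul,
    Finset.sum_add_distrib, ← Finset.mul_sum, P, Q, ← mvec_eq_toEuclideanCLM] at trace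
  rw [trace]
  simp only [coordSum_apply]
  rw [sum_coord_mul_fderiv_mvec_single, sum_fderiv_fderiv_mvec_single,
    Emat_mul_cholesky hA hL, ← hA, Kloc]
  simp only [Matrix.smul_apply, Matrix.diagonal_apply, smul_eq_mul, mul_ite, mul_zero,
    Finset.sum_ite_eq', Finset.mem_univ, if_true, mul_assoc, ← Finset.mul_sum]
  ring

theorem IsIsotropicKernel.abs_integral_jumpWeight_sub_le (hJ : IsIsotropicKernel J CJ)
    (hA : A x = L x * (L x)ᵀ) (hL : (L x).det ≠ 0) (hw : ∀ z, 0 ≤ jumpWeight J M A L b ε x z)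
    {f : EuclideanSpace ℝ (Fin n) → ℝ} (hf : Continuous f) {B : ℝ}
    (hB : ∀ z ∈ tsupport J, |secondTaylorRemainder f x (-(ε • mvec (L x) z))| ≤ B) :
    |(∫ z, jumpWeight J M A L b ε x z * (f (x - ε • mvec (L x) z) - f x)) -
        ε ^ 2 * (CJ * M / 2 * Kloc A b f x)| ≤ M * (∫ z, J z) * B := by
  set P := ε • Matrix.toEuclideanCLM (𝕜 := ℝ) (L x)
  set ℓ := ε • (coordSum n ∘L Matrix.toEuclideanCLM (𝕜 := ℝ) (Emat M A b x * L x))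
  have P_apply (z : EuclideanSpace ℝ (Fin n)) : P z = ε • mvec (L x) z := rfl
  have ℓ_apply (z : EuclideanSpace ℝ (Fin n)) :
      ℓ z = ε * coordSum n (mvec (Emat M A b x * L x) z) := rfl
  have weight_eq (z : EuclideanSpace ℝ (Fin n)) :
      jumpWeight J M A L b ε x z = J z * (M - ℓ z) := by
    rw [jumpWeight, atil, ← coordSum_apply, map_neg, map_smul, ← mvec_mul, ℓ_apply, smul_eq_mul,
      neg_add_eq_sub]
  have main_part : ∫ z, J z * (ℓ z * fderiv ℝ f x (P z) +
      M / 2 * fderiv ℝ (fderiv ℝ f) x (P z) (P z)) = ε ^ 2 * (CJ * M / 2 * Kloc A b f x) := by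
    rw [← hJ.integral_drift_add_diffusion hA hL, ← integral_const_mul]
    congr with z
    simp only [ℓ_apply, P_apply, map_smul, _root_.smul_apply, smul_eq_mul]
    ring
  simp only [weight_eq, ← main_part, ← P_apply]
  simpa only [mul_assoc] using abs_integral_increment_sub_le hJ.integrable hJ.hasCompactSupport
    hJ.even P ℓ (fun z ↦ weight_eq z ▸ hw z) hf hB

theorem IsIsotropicKernel.abs_Kop_sub_Kloc_le (hJ : IsIsotropicKernel J CJ)
    (hA : A x = L x * (L x)ᵀ) (hL : (L x).det ≠ 0) (hε : 0 < ε) (hM : 0 < M)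
    (hw : ∀ z, 0 ≤ jumpWeight J M A L b ε x z) {ρ : ℝ} (hρ : ∀ z ∈ tsupport J, ‖mvec (L x) z‖ ≤ ρ)
    (hρ0 : 0 ≤ ρ) {α H : ℝ} (hα : 0 ≤ α) (hH : 0 ≤ H) {f : EuclideanSpace ℝ (Fin n) → ℝ}
    (hf : HasHolderSecondDeriv α H f) :
    |Kop J CJ M A L b ε f x - Kloc A b f x| ≤
      2 / CJ * (∫ z, J z) * (n * (H * ρ ^ α) * ρ ^ 2) * ε ^ α := by
  have hCJ := hJ.pos
  have remainder_le : ∀ z ∈ tsupport J, |secondTaylorRemainder f x (-(ε • mvec (L x) z))| ≤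
      n * (H * (ε * ρ) ^ α) * (ε * ρ) ^ 2 := fun z hz ↦ by
    refine hf.abs_secondTaylorRemainder_le hα hH x ?_
    rw [norm_neg, norm_smul, Real.norm_of_nonneg hε.le]
    exact mul_le_mul_of_nonneg_left (hρ z hz) hε.le
  set I := ∫ z, jumpWeight J M A L b ε x z * (f (x - ε • mvec (L x) z) - f x)
  calc |Kop J CJ M A L b ε f x - Kloc A b f x|
      = 2 / (CJ * M * ε ^ 2) * |I - ε ^ 2 * (CJ * M / 2 * Kloc A b f x)| := by
        rw [Kop_eq_integral hA hL hε,
          ← abs_of_nonneg (show 0 ≤ 2 / (CJ * M * ε ^ 2) by positivity), ← abs_mul,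
          abs_of_nonneg (show 0 ≤ 2 / (CJ * M * ε ^ 2) by positivity)]
        congr 1
        simp only [I]
        field_simp
    _ ≤ 2 / (CJ * M * ε ^ 2) *
          (M * (∫ z, J z) * (n * (H * (ε * ρ) ^ α) * (ε * ρ) ^ 2)) := by
        gcongr
        exact hJ.abs_integral_jumpWeight_sub_le hA hL hw hf.contDiff.continuous remainder_le
    _ = 2 / CJ * (∫ z, J z) * (n * (H * ρ ^ α) * ρ ^ 2) * ε ^ α := by
        rw [Real.mul_rpow hε.le hρ0]
        field_simp

end RescaledOperator

section MaximumPrinciple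

theorem deriv_nonneg_of_isMaxOn_Icc {φ : ℝ → ℝ} {d a b t : ℝ} (ht : t ∈ Ioc a b)
    (hφ : HasDerivWithinAt φ d (Icc a b) t) (hmax : IsMaxOn φ (Icc a b) t) : 0 ≤ d := by
  have h := hmax.localize.hasFDerivWithinAt_nonpos hφ.hasFDerivWithinAt
    (sub_mem_posTangentConeAt_of_segment_subset ((convex_Icc a b).segment_subset
      (Ioc_subset_Icc_self ht) (left_mem_Icc.2 (ht.1.le.trans ht.2))))
  simp only [ContinuousLinearMap.toSpanSingleton_apply, smul_eq_mul] at h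
  exact nonneg_of_mul_nonpos_right h (sub_neg.2 ht.1)

variable {X : Type*} [TopologicalSpace X] {Ω : Set X} {T K : ℝ} {w d : X → ℝ → ℝ}

theorem le_mul_of_deriv_lt_at_max (hΩ : IsCompact (closure Ω))
    (hw : ContinuousOn (fun p : X × ℝ ↦ w p.1 p.2) (closure Ω ×ˢ Icc 0 T))
    (hbc : ∀ x ∉ Ω, ∀ t ∈ Icc 0 T, w x t = 0) (hic : ∀ x ∈ Ω, w x 0 = 0)
    (hd : ∀ x ∈ Ω, ∀ t ∈ Ioc 0 T, HasDerivWithinAt (w x) (d x t) (Icc 0 T) t) (hK : 0 ≤ K)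
    (hmax : ∀ x ∈ Ω, ∀ t ∈ Ioc 0 T, (∀ y, w y t ≤ w x t) → d x t < K) :
    ∀ x ∈ Ω, ∀ t ∈ Icc 0 T, w x t ≤ K * t := by
  intro x hx t ht
  obtain ⟨⟨x₀, t₀⟩, ⟨hx₀, ht₀⟩, is_max⟩ := (hΩ.prod isCompact_Icc).exists_isMaxOn
    ⟨(x, t), subset_closure hx, ht⟩ (hw.sub (g := fun p ↦ K * p.2) (by fun_prop))
  have max_le : ∀ y ∈ closure Ω, ∀ s ∈ Icc 0 T, w y s - K * s ≤ w x₀ t₀ - K * t₀ :=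
    fun y hy s hs ↦ is_max (a := (y, s)) ⟨hy, hs⟩
  by_contra! h_lt
  have max_pos : K * t₀ < w x₀ t₀ := by linarith [max_le x (subset_closure hx) t ht]
  have drift_nonneg : 0 ≤ K * t₀ := mul_nonneg hK ht₀.1
  have x₀_mem : x₀ ∈ Ω := by
    by_contra h
    linarith [hbc x₀ h t₀ ht₀]
  have t₀_mem : t₀ ∈ Ioc 0 T := by
    refine ⟨ht₀.1.lt_of_ne fun h ↦ ?_, ht₀.2⟩
    subst h
    linarith [hic x₀ x₀_mem]
  have spatial_max (y : X) : w y t₀ ≤ w x₀ t₀ := by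
    by_cases hy : y ∈ Ω
    · linarith [max_le y (subset_closure hy) t₀ ht₀]
    · linarith [hbc y hy t₀ ht₀]
  have d_ge : 0 ≤ d x₀ t₀ - K := deriv_nonneg_of_isMaxOn_Icc t₀_mem
    ((hd x₀ x₀_mem t₀ t₀_mem).sub
      (by simpa using ((hasDerivAt_id t₀).const_mul K).hasDerivWithinAt))
    fun s hs ↦ max_le x₀ hx₀ s hs
  linarith [hmax x₀ x₀_mem t₀ t₀_mem spatial_max]

theorem le_mul_of_deriv_le_at_max (hΩ : IsCompact (closure Ω))
    (hw : ContinuousOn (fun p : X × ℝ ↦ w p.1 p.2) (closure Ω ×ˢ Icc 0 T))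
    (hbc : ∀ x ∉ Ω, ∀ t ∈ Icc 0 T, w x t = 0) (hic : ∀ x ∈ Ω, w x 0 = 0)
    (hd : ∀ x ∈ Ω, ∀ t ∈ Ioc 0 T, HasDerivWithinAt (w x) (d x t) (Icc 0 T) t) (hK : 0 ≤ K)
    (hmax : ∀ x ∈ Ω, ∀ t ∈ Ioc 0 T, (∀ y, w y t ≤ w x t) → d x t ≤ K) :
    ∀ x ∈ Ω, ∀ t ∈ Icc 0 T, w x t ≤ K * t := by
  intro x hx t ht
  have larger_slope : ∀ K' ∈ Ioi K, w x t ≤ K' * t := fun K' hK' ↦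
    le_mul_of_deriv_lt_at_max hΩ hw hbc hic hd (hK.trans hK'.le)
      (fun y hy s hs h ↦ (hmax y hy s hs h).trans_lt hK') x hx t ht
  have slope_tendsto : Filter.Tendsto (fun K' ↦ K' * t) (nhdsWithin K (Ioi K)) (nhds (K * t)) :=
    ((continuous_mul_const t).tendsto K).mono_left nhdsWithin_le_nhds
  exact ge_of_tendsto slope_tendsto (Filter.eventually_of_mem self_mem_nhdsWithin larger_slope)

theorem abs_le_mul_of_deriv_le_at_extr (hΩ : IsCompact (closure Ω))
    (hw : ContinuousOn (fun p : X × ℝ ↦ w p.1 p.2) (closure Ω ×ˢ Icc 0 T))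
    (hbc : ∀ x ∉ Ω, ∀ t ∈ Icc 0 T, w x t = 0) (hic : ∀ x ∈ Ω, w x 0 = 0)
    (hd : ∀ x ∈ Ω, ∀ t ∈ Ioc 0 T, HasDerivWithinAt (w x) (d x t) (Icc 0 T) t) (hK : 0 ≤ K)
    (hmax : ∀ x ∈ Ω, ∀ t ∈ Ioc 0 T, (∀ y, w y t ≤ w x t) → d x t ≤ K)
    (hmin : ∀ x ∈ Ω, ∀ t ∈ Ioc 0 T, (∀ y, w x t ≤ w y t) → -K ≤ d x t) :
    ∀ x ∈ Ω, ∀ t ∈ Icc 0 T, |w x t| ≤ K * t := by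
  intro x hx t ht
  refine abs_le'.2 ⟨le_mul_of_deriv_le_at_max hΩ hw hbc hic hd hK hmax x hx t ht, ?_⟩
  exact le_mul_of_deriv_le_at_max (w := fun x t ↦ -w x t) (d := fun x t ↦ -d x t) hΩ hw.neg
    (fun x hx t ht ↦ neg_eq_zero.2 (hbc x hx t ht)) (fun x hx ↦ neg_eq_zero.2 (hic x hx))
    (fun x hx t ht ↦ (hd x hx t ht).neg) hK
    (fun x hx t ht h ↦ neg_le.1 (hmin x hx t ht fun y ↦ neg_le_neg_iff.1 (h y))) x hx t ht

end MaximumPrinciple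

section Stability

theorem measurable_of_continuousOn_of_eq_zero {X : Type*} [TopologicalSpace X] [MeasurableSpace X]
    [OpensMeasurableSpace X] {Ω : Set X} (hΩ : MeasurableSet Ω) {w : X → ℝ}
    (hw : ContinuousOn w Ω) (h0 : ∀ x ∉ Ω, w x = 0) : Measurable w := by
  classical
  rw [← indicator_eq_self.2 fun x hx ↦ not_imp_comm.1 (h0 x) hx, ← piecewise_eq_indicator]
  exact hw.measurable_piecewise continuousOn_const hΩ

theorem exists_abs_le_of_continuousOn_of_eq_zero {X : Type*} [TopologicalSpace X] {Ω : Set X}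
    (hΩ : IsCompact (closure Ω)) {w : X → ℝ} (hw : ContinuousOn w (closure Ω))
    (h0 : ∀ x ∉ Ω, w x = 0) : ∃ C, ∀ x, |w x| ≤ C := by
  obtain ⟨C, hC⟩ := hΩ.exists_bound_of_continuousOn hw
  refine ⟨max C 0, fun x ↦ ?_⟩
  by_cases hx : x ∈ Ω
  · exact (hC x (subset_closure hx)).trans (le_max_left _ _)
  · simp [h0 x hx]

variable {n : ℕ} {J : EuclideanSpace ℝ (Fin n) → ℝ} {CJ M ε : ℝ}
  {A L : EuclideanSpace ℝ (Fin n) → Matrix (Fin n) (Fin n) ℝ}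
  {b : EuclideanSpace ℝ (Fin n) → Fin n → ℝ} {Ω : Set (EuclideanSpace ℝ (Fin n))}

theorem IsIsotropicKernel.abs_sub_le_of_abs_residual_le (hJ : IsIsotropicKernel J CJ) (hM : 0 < M)
    (hA : ∀ x ∈ Ω, A x = L x * (L x)ᵀ) (hL : ∀ x ∈ Ω, (L x).det ≠ 0) (hε : 0 < ε)
    (hw : ∀ x ∈ Ω, ∀ z, 0 ≤ jumpWeight J M A L b ε x z)
    (hΩ : MeasurableSet Ω) (hΩb : Bornology.IsBounded Ω) {T K : ℝ} (hK : 0 ≤ K)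
    {u v v' : EuclideanSpace ℝ (Fin n) → ℝ → ℝ}
    (hv : ContinuousOn (fun p : EuclideanSpace ℝ (Fin n) × ℝ ↦ v p.1 p.2) (closure Ω ×ˢ Icc 0 T))
    (hv_space : ∀ t ∈ Ioc 0 T, Continuous fun x ↦ v x t)
    (hv' : ∀ x ∈ Ω, ∀ t ∈ Ioc 0 T, HasDerivWithinAt (v x) (v' x t) (Icc 0 T) t)
    (hres : ∀ x ∈ Ω, ∀ t ∈ Ioc 0 T, |Kop J CJ M A L b ε (fun y ↦ v y t) x - v' x t| ≤ K)
    (hu : ContinuousOn (fun p : EuclideanSpace ℝ (Fin n) × ℝ ↦ u p.1 p.2) (closure Ω ×ˢ Icc 0 T))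
    (hu' : ∀ x ∈ Ω, ∀ t ∈ Ioc 0 T,
      HasDerivWithinAt (u x) (Kop J CJ M A L b ε (fun y ↦ u y t) x) (Icc 0 T) t)
    (hbc : ∀ x ∉ Ω, ∀ t ∈ Icc 0 T, u x t = v x t) (hic : ∀ x ∈ Ω, u x 0 = v x 0) :
    ∀ x ∈ Ω, ∀ t ∈ Icc 0 T, |u x t - v x t| ≤ K * t := by
  set w : EuclideanSpace ℝ (Fin n) → ℝ → ℝ := fun x t ↦ u x t - v x t with hw_def
  have w_eq_zero : ∀ x ∉ Ω, ∀ t ∈ Icc 0 T, w x t = 0 := fun x hx t ht ↦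
    sub_eq_zero.2 (hbc x hx t ht)
  have w_cont := hu.sub hv
  have Kop_split : ∀ x ∈ Ω, ∀ t ∈ Ioc 0 T, Kop J CJ M A L b ε (fun y ↦ u y t) x =
      Kop J CJ M A L b ε (fun y ↦ w y t) x + Kop J CJ M A L b ε (fun y ↦ v y t) x := by
    intro x hx t ht
    have ht' := Ioc_subset_Icc_self ht
    have slice : ContinuousOn (fun y ↦ w y t) (closure Ω) :=
      w_cont.comp (f := fun y ↦ (y, t)) (by fun_prop) fun y hy ↦ ⟨hy, ht'⟩
    obtain ⟨C, hC⟩ := exists_abs_le_of_continuousOn_of_eq_zero hΩb.isCompact_closure slice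
      fun y hy ↦ w_eq_zero y hy t ht'
    rw [← Kop_add (hA x hx) (hL x hx) hε hJ.integrable hJ.hasCompactSupport
      (measurable_of_continuousOn_of_eq_zero hΩ (slice.mono subset_closure)
        fun y hy ↦ w_eq_zero y hy t ht') hC (hv_space t ht)]
    simp only [hw_def, sub_add_cancel]
  refine abs_le_mul_of_deriv_le_at_extr hΩb.isCompact_closure w_cont w_eq_zero
    (fun x hx ↦ sub_eq_zero.2 (hic x hx)) (fun x hx t ht ↦ (hu' x hx t ht).sub (hv' x hx t ht)) hK
    (fun x hx t ht hmax ↦ ?_) fun x hx t ht hmin ↦ ?_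
  · have nonpos := Kop_nonpos_of_forall_le (hA x hx) (hL x hx) hε hJ.pos hM (hw x hx) hmax
    linarith [(abs_le.1 (hres x hx t ht)).2, Kop_split x hx t ht]
  · have nonneg := Kop_nonpos_of_forall_le (hA x hx) (hL x hx) hε hJ.pos hM (hw x hx)
      (w := fun y ↦ -w y t) fun y ↦ neg_le_neg (hmin y)
    rw [Kop_neg] at nonneg
    linarith [(abs_le.1 (hres x hx t ht)).1, Kop_split x hx t ht]

theorem stmt9_general (hJ : IsIsotropicKernel J CJ) (hM : 0 < M)
    (hA : ∀ x ∈ Ω, A x = L x * (L x)ᵀ) (hL : ∀ x ∈ Ω, (L x).det ≠ 0)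
    {a : ℝ} (ha : ∀ x ∈ Ω, ∀ i, A x i i ≤ a)
    (hΩ : MeasurableSet Ω) (hΩb : Bornology.IsBounded Ω)
    {α H : ℝ} (hα : 0 ≤ α) (hH : 0 ≤ H) {T : ℝ} {v : EuclideanSpace ℝ (Fin n) → ℝ → ℝ}
    (hv : ContinuousOn (fun p : EuclideanSpace ℝ (Fin n) × ℝ ↦ v p.1 p.2) (closure Ω ×ˢ Icc 0 T))
    (hv_holder : ∀ t ∈ Ioc 0 T, HasHolderSecondDeriv α H fun x ↦ v x t)
    (hv' : ∀ x ∈ Ω, ∀ t ∈ Ioc 0 T,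
      HasDerivWithinAt (v x) (Kloc A b (fun y ↦ v y t) x) (Icc 0 T) t) :
    ∃ c, ∀ ε > 0, (∀ x ∈ Ω, ∀ z, 0 ≤ jumpWeight J M A L b ε x z) →
      ∀ u : EuclideanSpace ℝ (Fin n) → ℝ → ℝ,
      ContinuousOn (fun p : EuclideanSpace ℝ (Fin n) × ℝ ↦ u p.1 p.2) (closure Ω ×ˢ Icc 0 T) →
      (∀ x ∈ Ω, ∀ t ∈ Ioc 0 T,
        HasDerivWithinAt (u x) (Kop J CJ M A L b ε (fun y ↦ u y t) x) (Icc 0 T) t) →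
      (∀ x ∉ Ω, ∀ t ∈ Icc 0 T, u x t = v x t) → (∀ x ∈ Ω, u x 0 = v x 0) →
      ∀ x ∈ Ω, ∀ t ∈ Icc 0 T, |u x t - v x t| ≤ c * ε ^ α := by
  obtain ⟨ρ, hρ0, hρ⟩ :=
    exists_norm_mvec_le (fun x hx i ↦ hA x hx ▸ ha x hx i) hJ.hasCompactSupport.isCompact.isBounded
  set C := 2 / CJ * (∫ z, J z) * (n * (H * ρ ^ α) * ρ ^ 2)
  refine ⟨|C| * T, fun ε hε hw u hu hu' hbc hic x hx t ht ↦ ?_⟩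
  have consistency : ∀ x ∈ Ω, ∀ t ∈ Ioc 0 T,
      |Kop J CJ M A L b ε (fun y ↦ v y t) x - Kloc A b (fun y ↦ v y t) x| ≤ |C| * ε ^ α :=
    fun x hx t ht ↦ (hJ.abs_Kop_sub_Kloc_le (hA x hx) (hL x hx) hε hM (hw x hx) (hρ x hx) hρ0 hα hH
      (hv_holder t ht)).trans (by gcongr; exact le_abs_self C)
  calc |u x t - v x t| ≤ |C| * ε ^ α * t :=
        hJ.abs_sub_le_of_abs_residual_le hM hA hL hε hw hΩ hΩb (by positivity) hv
          (fun t ht ↦ (hv_holder t ht).contDiff.continuous) hv' consistency hu hu' hbc hic x hx t ht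
    _ ≤ |C| * ε ^ α * T := by gcongr; exact ht.2
    _ = |C| * T * ε ^ α := mul_right_comm _ _ _

end Stability

/-- Solutions of the rescaled nonlocal Dirichlet problems `∂ₜu^ε = 𝒦_ε u^ε` uniformly
approximate, at rate `ε^α`, the solution of the local Dirichlet problem
`∂ₜv = ∑ᵢⱼ aᵢⱼ∂ᵢ∂ⱼv + ∑ᵢ bᵢ∂ᵢv`. -/
theorem stmt9 (n : ℕ) (hn : 1 ≤ n)
    (J : EuclideanSpace ℝ (Fin n) → ℝ) (hJint : Integrable J)
    (hJcs : HasCompactSupport J) (hJ0 : ∀ x, 0 ≤ J x) (hJeven : ∀ x, J (-x) = J x)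
    (CJ : ℝ) (hCJ : 0 < CJ)
    (hJmom : ∀ i j : Fin n, ∫ x, J x * (x i * x j) = if i = j then CJ else 0)
    (α : ℝ) (hα : α ∈ Ioc (0:ℝ) 1) (H : ℝ) (hH : 0 ≤ H)
    (A : EuclideanSpace ℝ (Fin n) → Matrix (Fin n) (Fin n) ℝ)
    (hAsymm : ∀ x, (A x).IsSymm) (hApos : ∀ x, (A x).PosDef)
    (hAsmooth : ∀ i j : Fin n, ContDiff ℝ (⊤ : ℕ∞) (fun x => A x i j))
    (hAbdd : ∀ i j : Fin n, ∀ k : ℕ, ∃ C, ∀ x,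
      ‖iteratedFDeriv ℝ k (fun y => A y i j) x‖ ≤ C)
    (θ : ℝ) (hθ : 0 < θ)
    (hell : ∀ x, ∀ ξ : Fin n → ℝ, θ * ∑ i, ξ i ^ 2 ≤ ∑ i, ∑ j, A x i j * ξ i * ξ j)
    (L : EuclideanSpace ℝ (Fin n) → Matrix (Fin n) (Fin n) ℝ)
    (hChol : ∀ x, A x = L x * (L x)ᵀ)
    (hLtri : ∀ x, ∀ i j : Fin n, i < j → L x i j = 0)
    (hLdiag : ∀ x, ∀ i : Fin n, 0 < L x i i)
    (b : EuclideanSpace ℝ (Fin n) → Fin n → ℝ)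
    (hbsmooth : ∀ i : Fin n, ContDiff ℝ (⊤ : ℕ∞) (fun x => b x i))
    (hbbdd : ∃ C, ∀ x, ∀ i : Fin n, |b x i| ≤ C)
    (M : ℝ) (hM : 0 < M)
    (β : ℝ) (hβ : 0 < β)
    (hbeta : ∀ x, ∀ z ∈ tsupport J, ∀ ε ∈ Ioc (0:ℝ) 1,
      β ≤ atil M (-(ε • mvec (Emat M A b x) (mvec (L x) z))))
    (Ω : Set (EuclideanSpace ℝ (Fin n))) (hΩo : IsOpen Ω) (hΩb : Bornology.IsBounded Ω)
    (T : ℝ) (hT : 0 < T)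
    (g : EuclideanSpace ℝ (Fin n) → ℝ → ℝ) (u₀ : EuclideanSpace ℝ (Fin n) → ℝ)
    -- the solution ṽ of the local problem
    (v : EuclideanSpace ℝ (Fin n) → ℝ → ℝ)
    (hvbdd : ∃ C, ∀ x t, |v x t| ≤ C)
    (hvcont : Continuous (fun p : EuclideanSpace ℝ (Fin n) × ℝ => v p.1 p.2))
    (vt : EuclideanSpace ℝ (Fin n) → ℝ → ℝ)
    (hvt : ∀ x, ∀ t ∈ Icc (0:ℝ) T, HasDerivWithinAt (fun s => v x s) (vt x t) (Icc (0:ℝ) T) t)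
    (hvtcont : ∀ x, ContinuousOn (vt x) (Icc (0:ℝ) T))
    (hvC2 : ∀ t ∈ Icc (0:ℝ) T, ContDiff ℝ 2 (fun x => v x t))
    (hvder : ∃ C, ∀ t ∈ Icc (0:ℝ) T, ∀ x,
      ‖fderiv ℝ (fun y => v y t) x‖ ≤ C ∧ ‖fderiv ℝ (fderiv ℝ (fun y => v y t)) x‖ ≤ C)
    (hvHolder : ∀ t ∈ Icc (0:ℝ) T, ∀ x y, ∀ i j : Fin n,
      |pd2 (fun z => v z t) x i j - pd2 (fun z => v z t) y i j| ≤ H * ‖x - y‖ ^ α)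
    (hveq : ∀ x ∈ Ω, ∀ t ∈ Ioc (0:ℝ) T, vt x t = Kloc A b (fun y => v y t) x)
    (hvbc : ∀ x ∉ Ω, ∀ t ∈ Icc (0:ℝ) T, v x t = g x t)
    (hvic : ∀ x ∈ Ω, v x 0 = u₀ x)
    -- the solutions u^ε of the nonlocal problems
    (uε : ℝ → EuclideanSpace ℝ (Fin n) → ℝ → ℝ)
    (huεbdd : ∀ ε ∈ Ioc (0:ℝ) 1, ∃ C, ∀ x t, |uε ε x t| ≤ C)
    (huεcont : ∀ ε ∈ Ioc (0:ℝ) 1,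
      ContinuousOn (fun p : EuclideanSpace ℝ (Fin n) × ℝ => uε ε p.1 p.2)
        (closure Ω ×ˢ Icc (0:ℝ) T))
    (huεeq : ∀ ε ∈ Ioc (0:ℝ) 1, ∀ x ∈ Ω, ∀ t ∈ Ioc (0:ℝ) T,
      HasDerivWithinAt (fun s => uε ε x s)
        (Kop J CJ M A L b ε (fun y => uε ε y t) x) (Icc (0:ℝ) T) t)
    (huεbc : ∀ ε ∈ Ioc (0:ℝ) 1, ∀ x ∉ Ω, ∀ t ∈ Icc (0:ℝ) T, uε ε x t = g x t)
    (huεic : ∀ ε ∈ Ioc (0:ℝ) 1, ∀ x ∈ Ω, uε ε x 0 = u₀ x) :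
    ∃ c : ℝ, ∀ ε ∈ Ioc (0:ℝ) 1, ∀ x ∈ Ω, ∀ t ∈ Icc (0:ℝ) T,
      |uε ε x t - v x t| ≤ c * ε ^ α := by
  have hJ : IsIsotropicKernel J CJ := ⟨hJint, hJcs, hJeven, hCJ, hJmom⟩
  have hL (x : EuclideanSpace ℝ (Fin n)) : (L x).det ≠ 0 :=
    det_ne_zero_of_lowerTriangular_of_diag_pos (hLtri x) (hLdiag x)
  obtain ⟨a, ha⟩ : ∃ a, ∀ x i, A x i i ≤ a := by
    choose C hC using fun i ↦ hAbdd i i 0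
    refine ⟨∑ i, |C i|, fun x i ↦ (le_abs_self _).trans ?_⟩
    calc |A x i i| ≤ C i := by simpa using hC i x
      _ ≤ |C i| := le_abs_self _
      _ ≤ ∑ i, |C i| := Finset.single_le_sum (fun i _ ↦ abs_nonneg (C i)) (Finset.mem_univ i)
  obtain ⟨c, hc⟩ := stmt9_general hJ hM (fun x _ ↦ hChol x) (fun x _ ↦ hL x) (fun x _ ↦ ha x)
    hΩo.measurableSet hΩb hα.1.le hH hvcont.continuousOn
    (fun t ht ↦ ⟨hvC2 t (Ioc_subset_Icc_self ht), hvHolder t (Ioc_subset_Icc_self ht)⟩)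
    fun x hx t ht ↦ hveq x hx t ht ▸ hvt x t (Ioc_subset_Icc_self ht)
  exact ⟨c, fun ε hε ↦ hc ε hε.1
    (fun x _ z ↦ jumpWeight_nonneg (hJ0 z) fun hz ↦ hβ.le.trans (hbeta x z hz ε hε))
    (uε ε) (huεcont ε hε) (huεeq ε hε)
    (fun x hx t ht ↦ (huεbc ε hε x hx t ht).trans (hvbc x hx t ht).symm)
    fun x hx ↦ (huεic ε hε x hx).trans (hvic x hx).symm⟩
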